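/- Let φ, ψ be orientation-preserving circle homeomorphisms with irrational rotation numbers α, β respectively, such that 1, α, β are rationally independent, and let Q₁, Q₂ be their unique minimal sets. Then the product homeomorphism f = φ × ψ of T^2 has Q₁ × Q₂ as a minimal set. -/

import Mathlib

open Filter Topology

/-- The circle `T¹ = ℝ/ℤ`. -/
abbrev T1 := UnitAddCircle

/-- A minimal set of a map `f`: nonempty, closed, invariant, with no proper
nonempty closed invariant subset. -/
def IsMinimalSet {X : Type*} [TopologicalSpace X] (f : X → X) (M : Set X) : Prop :=
  M.Nonempty ∧ IsClosed M ∧ f '' M = M ∧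
    ∀ M' ⊆ M, M'.Nonempty → IsClosed M' → f '' M' = M' → M' = M

lemma aux_semiconj (Φ : ℝ → ℝ) (hc : Continuous Φ) (hm : StrictMono Φ)
    (hd : ∀ x : ℝ, Φ (x + 1) = Φ x + 1) (α : ℝ) (hirr : Irrational α)
    (hα : ∀ x : ℝ, Tendsto (fun n : ℕ => (Φ^[n] x - x) / n) atTop (𝓝 α)) :
    ∃ F : ℝ → ℝ, Continuous F ∧ Monotone F ∧ (∀ x, F (x + 1) = F x + 1) ∧
      ∀ x, F (Φ x) = F x + α := by
  let f : CircleDeg1Lift := ⟨⟨Φ, hm.monotone⟩, hd⟩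
  have hf : ⇑f = Φ := rfl
  have hsurj : Function.Surjective Φ := by
    have := (CircleDeg1Lift.continuous_iff_surjective f).1 (by rw [hf]; exact hc)
    exact this
  have hτ : f.translationNumber = α := by
    apply CircleDeg1Lift.translationNumber_eq_of_tendsto₀
    have := hα 0
    simpa [hf] using this
  let g : CircleDeg1Lift := (CircleDeg1Lift.translate (Multiplicative.ofAdd α) : CircleDeg1Liftˣ)
  have hg : Function.Bijective g := CircleDeg1Lift.isUnit_iff_bijective.1 (Units.isUnit _)
  obtain ⟨F, hF⟩ := CircleDeg1Lift.semiconj_of_bijective_of_translationNumber_eq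
    (f₁ := f) (f₂ := g) ⟨hm.injective, hsurj⟩ hg
    (by rw [hτ]; exact (CircleDeg1Lift.translationNumber_translate α).symm)
  have hFΦ : ∀ x, F (Φ x) = F x + α := by
    intro x
    have h1 := hF x
    have h2 : g (F x) = α + F x := CircleDeg1Lift.translate_apply α (F x)
    rw [h2, hf] at h1
    rw [h1, add_comm]
  refine ⟨F, ?_, F.monotone, F.map_add_one, hFΦ⟩
  apply F.monotone.continuous_of_denseRange
  have hden : Dense (AddSubgroup.closure {α, (1 : ℝ)} : Set ℝ) :=
    dense_addSubgroupClosure_pair_iff.2 (by simpa using hirr)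
  have hsub : ∀ t ∈ AddSubgroup.closure {α, (1 : ℝ)}, ∀ x, (∃ y, F y = F x + t) ∧
      ∃ y, F y = F x - t := by
    intro t ht
    induction ht using AddSubgroup.closure_induction with
    | mem t ht =>
      intro x
      rcases ht with rfl | rfl
      · refine ⟨⟨Φ x, hFΦ x⟩, ?_⟩
        obtain ⟨y, rfl⟩ := hsurj x
        exact ⟨y, by rw [hFΦ]; ring⟩
      · refine ⟨⟨x + 1, F.map_add_one x⟩, x - 1, ?_⟩
        have := F.map_add_one (x - 1)
        rw [sub_add_cancel] at this
        linarith
    | zero => intro x; exact ⟨⟨x, by simp⟩, ⟨x, by simp⟩⟩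
    | add a b _ _ ha hb =>
      intro x
      obtain ⟨y, hy⟩ := (ha x).1
      obtain ⟨z, hz⟩ := (hb y).1
      obtain ⟨y', hy'⟩ := (ha x).2
      obtain ⟨z', hz'⟩ := (hb y').2
      exact ⟨⟨z, by linarith⟩, ⟨z', by linarith⟩⟩
    | neg a _ ha =>
      intro x
      obtain ⟨y, hy⟩ := (ha x).1
      obtain ⟨y', hy'⟩ := (ha x).2
      exact ⟨⟨y', by linarith⟩, ⟨y, by linarith⟩⟩
  have h2 : Dense ((fun t => F 0 + t) '' (AddSubgroup.closure {α, (1 : ℝ)} : Set ℝ)) :=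
    (Homeomorph.addLeft (F 0)).surjective.denseRange.dense_image (by fun_prop) hden
  refine h2.mono ?_
  rintro _ ⟨t, ht, rfl⟩
  obtain ⟨y, hy⟩ := (hsub t ht 0).1
  exact ⟨y, hy⟩

lemma aux_trans {G : Type*} [AddCommGroup G] [TopologicalSpace G] [IsTopologicalAddGroup G]
    (g : G) (hg : DenseRange (fun n : ℤ => n • g)) (K : Set G) (hK : IsClosed K)
    (hne : K.Nonempty) (hinv : (fun z => z + g) '' K = K) : K = Set.univ := by
  obtain ⟨z, hz⟩ := hne
  have hmem : ∀ n : ℤ, z + n • g ∈ K := by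
    intro n
    induction n using Int.induction_on with
    | zero => simpa using hz
    | succ n ih =>
      rw [← hinv]
      exact ⟨_, ih, by simp only [add_zsmul, one_zsmul]; abel⟩
    | pred n ih =>
      rw [← hinv] at ih
      obtain ⟨w, hw, hwe⟩ := ih
      have : w = z + (-(n : ℤ) - 1) • g := by
        rw [sub_zsmul, one_zsmul]
        have h3 : w = (w + g) - g := by abel
        rw [h3]
        simp only at hwe
        rw [hwe]; abel
      rwa [this] at hw
  have hd : DenseRange (fun n : ℤ => z + n • g) :=
    (Homeomorph.addLeft z).surjective.denseRange.comp hg (by fun_prop)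
  rw [← hK.closure_eq]
  exact (hd.mono (by rintro _ ⟨n, rfl⟩; exact hmem n)).closure_eq

lemma aux_dens1 (ρ : ℝ) (h : Irrational ρ) (y ε : ℝ) (hε : 0 < ε) :
    ∃ k m : ℤ, |k * ρ + m - y| < ε := by
  have hden : Dense (AddSubgroup.closure {ρ, (1 : ℝ)} : Set ℝ) :=
    dense_addSubgroupClosure_pair_iff.2 (by simpa using h)
  obtain ⟨t, ht, hd⟩ := Metric.dense_iff.1 hden y ε hε
  obtain ⟨k, m, hkm⟩ := AddSubgroup.mem_closure_pair.1 hd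
  refine ⟨k, m, ?_⟩
  rw [Metric.mem_ball, Real.dist_eq] at ht
  simp only [zsmul_eq_mul, mul_one] at hkm
  rwa [hkm]

lemma aux_return {G : Type*} [NormedAddCommGroup G] [CompactSpace G] (g : G) (ε : ℝ)
    (hε : 0 < ε) : ∃ n : ℕ, 0 < n ∧ ‖n • g‖ < ε := by
  obtain ⟨a, θ, hθ, ht⟩ := CompactSpace.tendsto_subseq (fun n : ℕ => n • g)
  obtain ⟨N, hN⟩ := Metric.cauchySeq_iff'.1 ht.cauchySeq ε hε
  have h1 := hN (N + 1) (by omega)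
  have hlt : θ N < θ (N + 1) := hθ (by omega)
  refine ⟨θ (N + 1) - θ N, by omega, ?_⟩
  rw [dist_eq_norm] at h1
  simp only [Function.comp] at h1
  rwa [sub_nsmul _ hlt.le, ← sub_eq_add_neg]

lemma aux_kron (α β : ℝ)
    (hindep : ∀ N1 N2 N3 : ℤ, (N1 : ℝ) + N2 * α + N3 * β = 0 → N1 = 0 ∧ N2 = 0 ∧ N3 = 0) :
    DenseRange (fun n : ℤ => n • ((α : T1), (β : T1))) := by
  rw [DenseRange, Metric.dense_iff]
  rintro ⟨X, Y⟩ ε hε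
  obtain ⟨x, rfl⟩ := QuotientAddGroup.mk_surjective X
  obtain ⟨y, rfl⟩ := QuotientAddGroup.mk_surjective Y
  obtain ⟨n, hn, hsmall⟩ := aux_return ((α : T1), (β : T1)) (ε / 2) (by linarith)
  have e1 : ‖((n * α : ℝ) : T1)‖ < ε / 2 := by
    refine lt_of_le_of_lt ?_ hsmall
    have := norm_fst_le (n • ((α : T1), (β : T1)))
    simpa [← nsmul_eq_mul] using this
  have e2 : ‖((n * β : ℝ) : T1)‖ < ε / 2 := by
    refine lt_of_le_of_lt ?_ hsmall
    have := norm_snd_le (n • ((α : T1), (β : T1)))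
    simpa [← nsmul_eq_mul] using this
  rw [UnitAddCircle.norm_eq] at e1 e2
  set p := round (n * α)
  set q := round (n * β)
  set v1 : ℝ := n * α - p with hv1
  set v2 : ℝ := n * β - q with hv2
  have hv10 : v1 ≠ 0 := by
    intro h
    have := (hindep (-p) n 0 (by push_cast; linarith)).2.1
    omega
  have hirr : Irrational (v2 / v1) := by
    rintro ⟨r, hr⟩
    have hden : (r.den : ℝ) ≠ 0 := by exact_mod_cast r.den_nz
    have h1 : (r.num : ℝ) / r.den = v2 / v1 := by rw [← hr]; exact_mod_cast r.num_div_den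
    rw [div_eq_div_iff hden hv10] at h1
    have := (hindep (-(r.den * q) + r.num * p) (-(r.num * n)) (r.den * n) (by
      push_cast; rw [hv1, hv2] at h1; linarith)).2.2
    have h3 : 0 < (r.den : ℤ) * n := by
      have := r.pos
      positivity
    omega
  obtain ⟨k, m, hkm⟩ := aux_dens1 (v2 / v1) hirr (y - x * (v2 / v1)) (ε / 2) (by linarith)
  set t : ℝ := (x + k) / v1 with ht
  have hround := abs_sub_round t
  set j := round t
  have htv1 : t * v1 = x + k := by rw [ht]; field_simp
  have htv2 : t * v2 = k * (v2 / v1) + x * (v2 / v1) := by rw [ht]; field_simp; ring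
  refine ⟨(j * n) • ((α : T1), (β : T1)), ?_, ⟨j * n, rfl⟩⟩
  have key : ∀ (a b : ℝ) (i : ℤ) , |a - b - i| < ε → dist (a : T1) (b : T1) < ε := by
    intro a b i h
    rw [dist_eq_norm]
    have : ((a : T1) - (b : T1)) = ((a - b - i : ℝ) : T1) := by
      have h0 : ((i : ℝ) : T1) = 0 := (AddCircle.coe_eq_zero_iff (1 : ℝ)).2 ⟨i, by simp⟩
      rw [AddCircle.coe_sub, AddCircle.coe_sub, h0, sub_zero]
    rw [this]
    exact lt_of_le_of_lt (by rw [UnitAddCircle.norm_eq]; simpa using round_le (a - b - i) 0) h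
  have b1 : ∀ v : ℝ, |v| < ε / 2 → |j * v - t * v| < ε / 2 := by
    intro v hv
    rw [← sub_mul, abs_mul, abs_sub_comm]
    nlinarith [abs_nonneg v, abs_nonneg (t - j)]
  have c1 := b1 v1 e1
  have c2 := b1 v2 e2
  rw [Metric.mem_ball, Prod.dist_eq, max_lt_iff]
  constructor
  · have := key (((j * n : ℤ) : ℝ) * α) x (j * p + k) (by
      push_cast
      have : (j:ℝ) * n * α - x - (j * p + k) = j * v1 - t * v1 := by rw [htv1, hv1]; ring
      rw [this]; linarith)
    rw [← zsmul_eq_mul] at this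
    exact this
  · have := key (((j * n : ℤ) : ℝ) * β) y (j * q - m) (by
      push_cast
      have : (j:ℝ) * n * β - y - (j * q - m) = (j * v2 - t * v2) +
        (k * (v2 / v1) + m - (y - x * (v2 / v1))) := by rw [htv2, hv2]; ring
      rw [this]
      refine lt_of_le_of_lt (abs_add_le _ _) ?_
      linarith)
    rw [← zsmul_eq_mul] at this
    exact this

lemma aux_main (φ : T1 ≃ₜ T1) (Φ : ℝ → ℝ) (hc : Continuous Φ) (hm : StrictMono Φ)
    (hd : ∀ x : ℝ, Φ (x + 1) = Φ x + 1) (hl : ∀ x : ℝ, ((Φ x : T1)) = φ (x : T1))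
    (α : ℝ) (hirr : Irrational α)
    (hα : ∀ x : ℝ, Tendsto (fun n : ℕ => (Φ^[n] x - x) / n) atTop (𝓝 α))
    (Q : Set T1) (hQ : IsMinimalSet ⇑φ Q) :
    ∃ H : T1 → T1, Continuous H ∧ (∀ z, H (φ z) = H z + (α : T1)) ∧
      ∀ x ∈ Q, ∀ U ∈ 𝓝 x, ∃ s, ∀ z, H z = s → z ∈ U := by
  obtain ⟨F, hFc, hFm, hF1, hFΦ⟩ := aux_semiconj Φ hc hm hd α hirr hα
  have hper : Function.Periodic (fun x => ((F x : ℝ) : T1)) 1 := by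
    intro x
    simp [hF1]
  let H : T1 → T1 := hper.lift
  have hH : ∀ x : ℝ, H (x : T1) = (F x : T1) := fun x => hper.lift_coe x
  have hHc : Continuous H := by
    have hq : IsQuotientMap (fun x : ℝ => (x : T1)) := QuotientAddGroup.isQuotientMap_mk _
    rw [hq.continuous_iff]
    have : H ∘ (fun x : ℝ => (x : T1)) = fun x => ((F x : ℝ) : T1) := funext hH
    rw [this]
    exact (AddCircle.continuous_mk' 1).comp hFc
  have hHφ : ∀ z, H (φ z) = H z + (α : T1) := by
    intro z
    obtain ⟨x, rfl⟩ := QuotientAddGroup.mk_surjective z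
    have h1 := hl x
    have : φ (QuotientAddGroup.mk x) = ((Φ x : ℝ) : T1) := h1.symm
    rw [this, hH, hFΦ]
    have h2 : H (QuotientAddGroup.mk x) = (F x : T1) := hH x
    rw [h2]; simp
  refine ⟨H, hHc, hHφ, ?_⟩
  obtain ⟨hQne, hQc, hQinv, hQmin⟩ := hQ
  -- the image of Q is everything
  have himg : H '' Q = Set.univ := by
    refine aux_trans (α : T1) ?_ _ (hQc.isCompact.image hHc).isClosed (hQne.image H) ?_
    · have := (AddCircle.denseRange_zsmul_coe_iff (a := α) (p := 1)).2 (by simpa using hirr)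
      exact this
    · rw [Set.image_image]
      conv_rhs => rw [← hQinv, Set.image_image]
      simp only [hHφ]
  -- points of Q are not points of local constancy
  let O : Set T1 := {z | ∀ᶠ w in 𝓝 z, H w = H z}
  have hOopen : IsOpen O := by
    rw [isOpen_iff_mem_nhds]
    intro z hz
    have hz' : ∀ᶠ w in 𝓝 z, H w = H z := hz
    filter_upwards [hz'.eventually_nhds, hz'] with w hw hw2
    change ∀ᶠ u in 𝓝 w, H u = H w
    rw [hw2]; exact hw
  have hOφ : ∀ z, φ z ∈ O ↔ z ∈ O := by
    intro z
    change (∀ᶠ w in 𝓝 (φ z), H w = H (φ z)) ↔ ∀ᶠ w in 𝓝 z, H w = H z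
    rw [← φ.map_nhds_eq, eventually_map]
    simp [hHφ]
  have hQO : ∃ z ∈ Q, z ∉ O := by
    by_contra! hcon
    have hfin : (H '' Q).Finite := by
      obtain ⟨t, ht, hcov⟩ := hQc.isCompact.elim_nhds_subcover
        (fun z => {w | H w = H z}) (fun z hz => hcon z hz)
      refine (t.finite_toSet.image H).subset ?_
      rintro _ ⟨z, hz, rfl⟩
      have := hcov hz
      simp only [Set.mem_iUnion] at this
      obtain ⟨w, hw, hzw⟩ := this
      exact ⟨w, hw, hzw.symm⟩
    rw [himg] at hfin
    have : Finite T1 := Set.finite_univ_iff.1 hfin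
    have hinj : Function.Injective (fun x : Set.Ico (0:ℝ) (0+1) => ((x : ℝ) : T1)) :=
      (AddCircle.equivIco 1 0).symm.injective
    have := Finite.of_injective _ hinj
    exact (Set.Ico_infinite (show (0:ℝ) < 0 + 1 by norm_num)) this
  have hQO' : ∀ x ∈ Q, x ∉ O := by
    have := hQmin (Q \ O) Set.sdiff_subset hQO (hQc.sdiff hOopen) (by
      ext w
      constructor
      · rintro ⟨z, ⟨hz, hzO⟩, rfl⟩
        exact ⟨hQinv ▸ Set.mem_image_of_mem _ hz, fun h => hzO ((hOφ z).1 h)⟩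
      · rintro ⟨hw, hwO⟩
        rw [← hQinv] at hw
        obtain ⟨z, hz, rfl⟩ := hw
        exact ⟨z, ⟨hz, fun h => hwO ((hOφ z).2 h)⟩, rfl⟩)
    intro x hx
    rw [← this] at hx
    exact hx.2
  intro x hx U hU
  obtain ⟨x0, rfl⟩ := QuotientAddGroup.mk_surjective x
  have hpre : (fun y : ℝ => (y : T1)) ⁻¹' U ∈ 𝓝 x0 :=
    (AddCircle.continuous_mk' 1).continuousAt.preimage_mem_nhds hU
  obtain ⟨δ, hδ, hball⟩ := Metric.mem_nhds_iff.1 hpre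
  have hnc : ∃ w ∈ Metric.ball x0 δ, F w ≠ F x0 := by
    by_contra! hcon
    apply hQO' _ hx
    have hopen : IsOpenMap (fun y : ℝ => (y : T1)) := QuotientAddGroup.isOpenMap_coe
    have := hopen.image_mem_nhds (Metric.ball_mem_nhds x0 hδ)
    refine Filter.mem_of_superset this ?_
    rintro _ ⟨w, hw, rfl⟩
    change H (w : T1) = H (x0 : T1)
    rw [hH, hH, hcon w hw]
  have hcd : ∃ c d, c ∈ Metric.ball x0 δ ∧ d ∈ Metric.ball x0 δ ∧ F c < F d := by
    obtain ⟨w, hw, hne⟩ := hnc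
    rcases lt_or_gt_of_ne hne with h | h
    · exact ⟨w, x0, hw, Metric.mem_ball_self hδ, h⟩
    · exact ⟨x0, w, Metric.mem_ball_self hδ, hw, h⟩
  obtain ⟨c, d, hcb, hdb, hlt⟩ := hcd
  refine ⟨(((F c + F d) / 2 : ℝ) : T1), ?_⟩
  intro z hz
  obtain ⟨z0, rfl⟩ := QuotientAddGroup.mk_surjective z
  have hz' : ((F z0 : ℝ) : T1) = (((F c + F d) / 2 : ℝ) : T1) := by rw [← hH]; exact hz
  have hz2 : ((F z0 - (F c + F d) / 2 : ℝ) : T1) = 0 := by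
    rw [AddCircle.coe_sub, hz', sub_self]
  obtain ⟨n, hn⟩ := AddCircle.coe_eq_zero_iff (1 : ℝ) |>.1 hz2
  have hn' : (n : ℝ) = F z0 - (F c + F d) / 2 := by simpa using hn
  have hint : F (z0 - n) = F z0 - n :=
    CircleDeg1Lift.map_sub_int ⟨⟨F, hFm⟩, hF1⟩ z0 n
  have h1 : c < z0 - n := hFm.reflect_lt (by rw [hint]; linarith)
  have h2 : z0 - n < d := hFm.reflect_lt (by rw [hint]; linarith)
  have h3 : z0 - n ∈ Metric.ball x0 δ := by
    rw [Real.ball_eq_Ioo] at hcb hdb ⊢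
    exact ⟨hcb.1.trans h1, h2.trans hdb.2⟩
  have h4 : ((z0 - n : ℝ) : T1) ∈ U := hball h3
  have h5 : ((z0 - n : ℝ) : T1) = (z0 : T1) := by simp
  rw [h5] at h4
  exact h4

/-- If `φ, ψ` are orientation-preserving circle homeomorphisms with
irrational rotation numbers `α, β` such that `1, α, β` are rationally independent,
and `Q₁, Q₂` are their unique minimal sets, then the product homeomorphism
`f = φ × ψ` of the torus has `Q₁ × Q₂` as a minimal set. -/
theorem stmt15 (φ ψ : T1 ≃ₜ T1) (Φ Ψ : ℝ → ℝ)
    (hΦc : Continuous Φ) (hΦm : StrictMono Φ) (hΦd : ∀ x : ℝ, Φ (x + 1) = Φ x + 1)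
    (hΦl : ∀ x : ℝ, ((Φ x : T1)) = φ (x : T1))
    (hΨc : Continuous Ψ) (hΨm : StrictMono Ψ) (hΨd : ∀ x : ℝ, Ψ (x + 1) = Ψ x + 1)
    (hΨl : ∀ x : ℝ, ((Ψ x : T1)) = ψ (x : T1))
    (α β : ℝ) (hαirr : Irrational α) (hβirr : Irrational β)
    (hα : ∀ x : ℝ, Tendsto (fun n : ℕ => (Φ^[n] x - x) / n) atTop (𝓝 α))
    (hβ : ∀ x : ℝ, Tendsto (fun n : ℕ => (Ψ^[n] x - x) / n) atTop (𝓝 β))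
    (hindep : ∀ N1 N2 N3 : ℤ, (N1 : ℝ) + N2 * α + N3 * β = 0 → N1 = 0 ∧ N2 = 0 ∧ N3 = 0)
    (Q1 Q2 : Set T1)
    (hQ1 : IsMinimalSet ⇑φ Q1) (hQ2 : IsMinimalSet ⇑ψ Q2)
    (hQU1 : ∀ M : Set T1, IsMinimalSet ⇑φ M → M = Q1)
    (hQU2 : ∀ M : Set T1, IsMinimalSet ⇑ψ M → M = Q2) :
    IsMinimalSet (fun z : T1 × T1 => (φ z.1, ψ z.2)) (Q1 ×ˢ Q2) := by
  obtain ⟨H1, hc1, hs1, hU1⟩ := aux_main φ Φ hΦc hΦm hΦd hΦl α hαirr hα Q1 hQ1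
  obtain ⟨H2, hc2, hs2, hU2⟩ := aux_main ψ Ψ hΨc hΨm hΨd hΨl β hβirr hβ Q2 hQ2
  obtain ⟨hne1, hcl1, hinv1, -⟩ := hQ1
  obtain ⟨hne2, hcl2, hinv2, -⟩ := hQ2
  refine ⟨hne1.prod hne2, hcl1.prod hcl2, ?_, ?_⟩
  · have := Set.prodMap_image_prod φ ψ Q1 Q2
    rw [hinv1, hinv2] at this
    exact this
  intro M hM hMne hMc hMinv
  refine Set.Subset.antisymm hM ?_
  have himg : (fun z : T1 × T1 => (H1 z.1, H2 z.2)) '' M = Set.univ := by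
    refine aux_trans ((α : T1), (β : T1)) (aux_kron α β hindep) _
      (hMc.isCompact.image (by fun_prop)).isClosed (hMne.image _) ?_
    rw [Set.image_image]
    conv_rhs => rw [← hMinv, Set.image_image]
    simp only [hs1, hs2, Prod.mk_add_mk]
  rintro ⟨x, y⟩ ⟨hx, hy⟩
  rw [← hMc.closure_eq, mem_closure_iff_nhds]
  intro W hW
  obtain ⟨U, hU, V, hV, hUV⟩ := mem_nhds_prod_iff.1 hW
  obtain ⟨s, hs⟩ := hU1 x hx U hU
  obtain ⟨t, ht⟩ := hU2 y hy V hV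
  have : (s, t) ∈ (fun z : T1 × T1 => (H1 z.1, H2 z.2)) '' M := himg ▸ Set.mem_univ _
  obtain ⟨z, hz, hzst⟩ := this
  rw [Prod.mk.injEq] at hzst
  exact ⟨z, hUV ⟨hs _ hzst.1, ht _ hzst.2⟩, hz⟩
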